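/- arXiv:2002.07785 — 3 statements merged into one kernel-verified Lean document; each statement's English description precedes it below -/
import Mathlib

section
/- Let I ⊆ ℝ be an interval and let p, b, a : I → ℂ be differentiable with |p(t)| < 1 for all t ∈ I, satisfying i p' = (N − (1−|p|²)E)p + a·conj(b), i b' = (N+E)b + E·a·conj(p), i a' = (N−E)a − E|p|²·b·p, where E(t) = |b(t)p(t)+a(t)|²/(1−|p(t)|²)² and N(t) = |b(t)|² + (1−|p(t)|²)E(t). Then the quantity S(t) := (N+E)|p|² + (E/2)|p|⁴ + (a·conj(b)·conj(p) + conj(a)·b·p) is constant on I. -/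
open ComplexConjugate

/-- `E = |bp+a|² / (1-|p|²)²`, evaluated pointwise in time. -/
noncomputable def Etr (p b a : ℝ → ℂ) (t : ℝ) : ℝ :=
  ‖b t * p t + a t‖ ^ 2 / (1 - ‖p t‖ ^ 2) ^ 2

/-- `N = |b|² + (1-|p|²) E`, evaluated pointwise in time. -/
noncomputable def Ntr (p b a : ℝ → ℂ) (t : ℝ) : ℝ :=
  ‖b t‖ ^ 2 + (1 - ‖p t‖ ^ 2) * Etr p b a t

/-- `S = (N+E)|p|² + (E/2)|p|⁴ + (a conj(b) conj(p) + conj(a) b p)`,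
evaluated pointwise in time (a complex number, which is in fact real). -/
noncomputable def Str (p b a : ℝ → ℂ) (t : ℝ) : ℂ :=
  ((Ntr p b a t + Etr p b a t : ℝ) : ℂ) * ((‖p t‖ ^ 2 : ℝ) : ℂ)
    + ((Etr p b a t / 2 : ℝ) : ℂ) * ((‖p t‖ ^ 4 : ℝ) : ℂ)
    + (a t * conj (b t) * conj (p t) + conj (a t) * b t * p t)

/-!
Put `κ = Im (a conj(b) conj(p))` and `D = 1 - |p|²`. Whenever `i f' = r f + w` with `r` real, the
phase rotation `r f` does not affect the modulus and `(|f|²)' = 2 Im (conj(f) w)`. Applied to the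
equations for `p` and `a`, this gives `(|p|²)' = 2κ` and `(|a|²)' = 2E|p|²κ`. The numerator of `E`
comes from `F = bp + a`, which satisfies `i F' = 2N F - 2DE a`, so `(|F|²)' = -4DEκ = 2DD'E`;
as `|F|² = D²E`, it follows that `E' = 0`.
Substituting `N = |b|² + DE` and `|F|² = D²E` into `S` turns it into `E(1 + |p|⁴/2) - |a|²`, whose
derivative is `E|p|²·2κ - 2E|p|²κ = 0`.
-/

theorem one_sub_norm_sq_ne_zero {V : Type*} [SeminormedAddGroup V] {x : V} (hx : ‖x‖ ≠ 1) :
    1 - ‖x‖ ^ 2 ≠ 0 :=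
  sub_ne_zero.mpr fun h =>
    hx ((pow_eq_one_iff_of_nonneg (norm_nonneg x) two_ne_zero).mp h.symm)

theorem eq_of_forall_hasDerivWithinAt_zero {V : Type*} [NormedAddCommGroup V] [NormedSpace ℝ V]
    {f : ℝ → V} {s : Set ℝ} (hs : s.OrdConnected) (hf : ∀ t ∈ s, HasDerivWithinAt f 0 s t)
    {x y : ℝ} (hx : x ∈ s) (hy : y ∈ s) : f x = f y := by
  have bound := hs.convex.norm_image_sub_le_of_norm_hasDerivWithin_le (C := 0) hf (by simp) hy hx
  rwa [zero_mul, norm_le_zero_iff, sub_eq_zero] at bound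

theorem hasDerivWithinAt_norm_sq_of_I_mul_eq {f : ℝ → ℂ} {f' w : ℂ} {r : ℝ} {s : Set ℝ} {t : ℝ}
    (hf : HasDerivWithinAt f f' s t) (h : Complex.I * f' = r * f t + w) :
    HasDerivWithinAt (fun τ => ‖f τ‖ ^ 2) (2 * (conj (f t) * w).im) s t := by
  refine hf.norm_sq.congr_deriv ?_
  obtain rfl : w = Complex.I * f' - r * f t := eq_sub_of_add_eq' h.symm
  simp only [Complex.inner, Complex.mul_re, Complex.mul_im, Complex.sub_re, Complex.sub_im,
    Complex.conj_re, Complex.conj_im, Complex.I_re, Complex.I_im, Complex.ofReal_re,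
    Complex.ofReal_im]
  ring

/-- The imaginary part `κ` of the interaction term `a conj(b) conj(p)`, whose real part enters `S`.
It governs the evolution of all the moduli. -/
noncomputable def szegoFlux (p b a : ℝ → ℂ) (t : ℝ) : ℝ :=
  (a t * conj (b t) * conj (p t)).im

/-- The truncated Szegő system on `L(1)` holds at time `t`, where `p'`, `b'`, `a'` are the
derivatives of `p`, `b`, `a` at `t` within `I`; they are one-sided at an endpoint of an
interval `I`. -/
structure IsSzegoSolutionWithinAt (p b a : ℝ → ℂ) (p' b' a' : ℂ) (I : Set ℝ) (t : ℝ) : Prop where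
  hasDerivWithinAt_p : HasDerivWithinAt p p' I t
  hasDerivWithinAt_b : HasDerivWithinAt b b' I t
  hasDerivWithinAt_a : HasDerivWithinAt a a' I t
  I_mul_p' : Complex.I * p' =
    ((Ntr p b a t - (1 - ‖p t‖ ^ 2) * Etr p b a t : ℝ) : ℂ) * p t + a t * conj (b t)
  I_mul_b' : Complex.I * b' =
    ((Ntr p b a t + Etr p b a t : ℝ) : ℂ) * b t + (Etr p b a t : ℂ) * a t * conj (p t)
  I_mul_a' : Complex.I * a' =
    ((Ntr p b a t - Etr p b a t : ℝ) : ℂ) * a t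
      - ((Etr p b a t * ‖p t‖ ^ 2 : ℝ) : ℂ) * b t * p t

section Pointwise

variable {p b a : ℝ → ℂ} {t : ℝ}

theorem im_conj_mul_mul_eq_neg_szegoFlux :
    (conj (a t) * (b t * p t)).im = -szegoFlux p b a t := by
  simp only [szegoFlux, ← Complex.conj_im, map_mul, Complex.conj_conj, mul_assoc]

theorem im_conj_mul_add_mul_eq_szegoFlux :
    (conj (b t * p t + a t) * a t).im = szegoFlux p b a t := by
  rw [map_add, add_mul, Complex.add_im, Complex.conj_mul', map_mul, szegoFlux]
  norm_cast
  rw [add_zero, mul_comm, mul_assoc]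

theorem norm_mul_add_sq_eq_sq_mul_Etr (hp : ‖p t‖ ≠ 1) :
    ‖b t * p t + a t‖ ^ 2 = (1 - ‖p t‖ ^ 2) ^ 2 * Etr p b a t :=
  (mul_div_cancel₀ _ (pow_ne_zero 2 (one_sub_norm_sq_ne_zero hp))).symm

theorem Str_eq_Etr_mul_sub_norm_sq (hp : ‖p t‖ ≠ 1) :
    Str p b a t = ((Etr p b a t * (1 + ‖p t‖ ^ 4 / 2) - ‖a t‖ ^ 2 : ℝ) : ℂ) := by
  have interaction : a t * conj (b t) * conj (p t) + conj (a t) * b t * p t =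
      ((‖b t * p t + a t‖ ^ 2 - ‖b t‖ ^ 2 * ‖p t‖ ^ 2 - ‖a t‖ ^ 2 : ℝ) : ℂ) := by
    push_cast
    simp only [← Complex.mul_conj', map_add, map_mul]
    ring
  rw [Str, interaction, norm_mul_add_sq_eq_sq_mul_Etr hp, Ntr]
  push_cast
  ring

end Pointwise

namespace IsSzegoSolutionWithinAt

variable {p b a : ℝ → ℂ} {p' b' a' : ℂ} {I : Set ℝ} {t : ℝ}

theorem hasDerivWithinAt_norm_sq_p (h : IsSzegoSolutionWithinAt p b a p' b' a' I t) :
    HasDerivWithinAt (fun τ => ‖p τ‖ ^ 2) (2 * szegoFlux p b a t) I t := by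
  refine (hasDerivWithinAt_norm_sq_of_I_mul_eq h.hasDerivWithinAt_p h.I_mul_p').congr_deriv ?_
  rw [szegoFlux, mul_comm (conj (p t))]

theorem hasDerivWithinAt_norm_sq_a (h : IsSzegoSolutionWithinAt p b a p' b' a' I t) :
    HasDerivWithinAt (fun τ => ‖a τ‖ ^ 2)
      (2 * (Etr p b a t * ‖p t‖ ^ 2) * szegoFlux p b a t) I t := by
  have ha' : Complex.I * a' = ((Ntr p b a t - Etr p b a t : ℝ) : ℂ) * a t
      + ((-(Etr p b a t * ‖p t‖ ^ 2) : ℝ) : ℂ) * (b t * p t) := by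
    rw [h.I_mul_a']
    push_cast
    ring
  refine (hasDerivWithinAt_norm_sq_of_I_mul_eq h.hasDerivWithinAt_a ha').congr_deriv ?_
  rw [mul_left_comm, Complex.im_ofReal_mul, im_conj_mul_mul_eq_neg_szegoFlux]
  ring

theorem I_mul_deriv_mul_add (h : IsSzegoSolutionWithinAt p b a p' b' a' I t) :
    Complex.I * (b' * p t + b t * p' + a') =
      ((2 * Ntr p b a t : ℝ) : ℂ) * (b t * p t + a t)
        + ((-2 * (1 - ‖p t‖ ^ 2) * Etr p b a t : ℝ) : ℂ) * a t := by
  have hN : (Ntr p b a t : ℂ) =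
      b t * conj (b t) + (1 - p t * conj (p t)) * Etr p b a t := by
    simp only [Ntr, Complex.mul_conj']
    push_cast
    rfl
  calc Complex.I * (b' * p t + b t * p' + a')
      = Complex.I * b' * p t + b t * (Complex.I * p') + Complex.I * a' := by ring
    _ = _ := by
      rw [h.I_mul_p', h.I_mul_b', h.I_mul_a']
      push_cast
      rw [← Complex.mul_conj' (p t)]
      linear_combination (-a t) * hN

theorem hasDerivWithinAt_norm_mul_add_sq (h : IsSzegoSolutionWithinAt p b a p' b' a' I t) :
    HasDerivWithinAt (fun τ => ‖b τ * p τ + a τ‖ ^ 2)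
      (-4 * (1 - ‖p t‖ ^ 2) * Etr p b a t * szegoFlux p b a t) I t := by
  have hF := (h.hasDerivWithinAt_b.fun_mul h.hasDerivWithinAt_p).fun_add h.hasDerivWithinAt_a
  refine (hasDerivWithinAt_norm_sq_of_I_mul_eq hF h.I_mul_deriv_mul_add).congr_deriv ?_
  rw [mul_left_comm, Complex.im_ofReal_mul, im_conj_mul_add_mul_eq_szegoFlux]
  ring

theorem hasDerivWithinAt_Etr (h : IsSzegoSolutionWithinAt p b a p' b' a' I t)
    (hp : ‖p t‖ ≠ 1) : HasDerivWithinAt (Etr p b a) 0 I t := by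
  have hD := one_sub_norm_sq_ne_zero hp
  refine (h.hasDerivWithinAt_norm_mul_add_sq.fun_div
    ((h.hasDerivWithinAt_norm_sq_p.const_sub 1).fun_pow 2) (pow_ne_zero 2 hD)).congr_deriv ?_
  rw [norm_mul_add_sq_eq_sq_mul_Etr hp]
  ring

theorem hasDerivWithinAt_Etr_mul_sub_norm_sq (h : IsSzegoSolutionWithinAt p b a p' b' a' I t)
    (hp : ‖p t‖ ≠ 1) :
    HasDerivWithinAt (fun τ => Etr p b a τ * (1 + ‖p τ‖ ^ 4 / 2) - ‖a τ‖ ^ 2) 0 I t := by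
  have hp4 : HasDerivWithinAt (fun τ => ‖p τ‖ ^ 4) (4 * ‖p t‖ ^ 2 * szegoFlux p b a t) I t := by
    simpa only [← pow_mul] using (h.hasDerivWithinAt_norm_sq_p.fun_pow 2).congr_deriv (by ring)
  refine (((h.hasDerivWithinAt_Etr hp).mul ((hp4.div_const 2).const_add 1)).sub
    h.hasDerivWithinAt_norm_sq_a).congr_deriv ?_
  ring

end IsSzegoSolutionWithinAt

theorem truncated_szego_L1_S_conserved_general {I : Set ℝ} (hI : I.OrdConnected)
    {p b a p' b' a' : ℝ → ℂ} (hp : ∀ t ∈ I, ‖p t‖ ≠ 1)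
    (h : ∀ t ∈ I, IsSzegoSolutionWithinAt p b a (p' t) (b' t) (a' t) I t) :
    ∀ t ∈ I, ∀ t' ∈ I, Str p b a t = Str p b a t' := by
  intro t ht t' ht'
  rw [Str_eq_Etr_mul_sub_norm_sq (hp t ht), Str_eq_Etr_mul_sub_norm_sq (hp t' ht')]
  exact congrArg Complex.ofReal <| eq_of_forall_hasDerivWithinAt_zero hI
    (fun τ hτ => (h τ hτ).hasDerivWithinAt_Etr_mul_sub_norm_sq (hp τ hτ)) ht ht'

/-- Along solutions of the truncated Szegő `L(1)` ODE system on an interval `I`,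
the quantity `S = (N+E)|p|² + (E/2)|p|⁴ + (a conj(b) conj(p) + conj(a) b p)`
is constant. -/
theorem truncated_szego_L1_S_conserved (I : Set ℝ) (hI : I.OrdConnected)
    (p b a : ℝ → ℂ)
    (hp : ∀ t ∈ I, DifferentiableAt ℝ p t)
    (hb : ∀ t ∈ I, DifferentiableAt ℝ b t)
    (ha : ∀ t ∈ I, DifferentiableAt ℝ a t)
    (hp1 : ∀ t ∈ I, ‖p t‖ < 1)
    (hode : ∀ t ∈ I,
      Complex.I * deriv p t =
        ((Ntr p b a t - (1 - ‖p t‖ ^ 2) * Etr p b a t : ℝ) : ℂ) * p t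
          + a t * conj (b t) ∧
      Complex.I * deriv b t =
        ((Ntr p b a t + Etr p b a t : ℝ) : ℂ) * b t
          + (Etr p b a t : ℂ) * a t * conj (p t) ∧
      Complex.I * deriv a t =
        ((Ntr p b a t - Etr p b a t : ℝ) : ℂ) * a t
          - ((Etr p b a t * ‖p t‖ ^ 2 : ℝ) : ℂ) * b t * p t) :
    ∀ t ∈ I, ∀ t' ∈ I, Str p b a t = Str p b a t' :=
  truncated_szego_L1_S_conserved_general hI (fun t ht => (hp1 t ht).ne) fun t ht =>
    ⟨(hp t ht).hasDerivAt.hasDerivWithinAt, (hb t ht).hasDerivAt.hasDerivWithinAt,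
      (ha t ht).hasDerivAt.hasDerivWithinAt, (hode t ht).1, (hode t ht).2.1, (hode t ht).2.2⟩
end

section
/- Let 0 ≤ x₀ < 1 and c̃ > 0, and define x(t) := (c̃t² + x₀)/(c̃t² + 1). Then for all t ∈ ℝ: (i) x'(t)² = (4c̃/(1−x₀)²)·(1−x(t))³·(x(t)−x₀), and (ii) 1 − x(t) = (1−x₀)/(1 + c̃t²); in particular lim_{t→∞} t²·(1−x(t)) = (1−x₀)/c̃, so x(t) → 1 at a polynomial (quadratic) rate. -/
open Filter Topology

/-!
Set `D = c t² + 1`. The quantities `1 - x`, `x - x₀` and `x'` are all `1 - x₀` times a monomial in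
`t` over a power of `D`, namely `(1 - x₀) / D`, `(1 - x₀) c t² / D` and `2 c t (1 - x₀) / D²`. Hence
`x'²` and `(1 - x)³ (x - x₀)` are both multiples of `t² / D⁴`, and comparing coefficients gives the
constant `4c / (1 - x₀)²`. Dividing numerator and denominator of `t² (1 - x)` by `t²` gives
`(1 - x₀) / (c + t⁻²)`, whose limit at infinity is visible.
-/

/-- The explicit solution `x(t) = (c t² + x₀) / (c t² + 1)` of the equation of motion in the quartic
effective potential with a triple zero at `1` and a simple zero at `x₀`. It is defined over any
field; where `c t² + 1 = 0` it takes the junk value `0`. -/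
def explicitSolution {𝕜 : Type*} [Field 𝕜] (x₀ c t : 𝕜) : 𝕜 :=
  (c * t ^ 2 + x₀) / (c * t ^ 2 + 1)

namespace explicitSolution

section Field

variable {𝕜 : Type*} [Field 𝕜] {c t : 𝕜}

theorem one_sub_eq (x₀ : 𝕜) (ht : c * t ^ 2 + 1 ≠ 0) :
    1 - explicitSolution x₀ c t = (1 - x₀) / (c * t ^ 2 + 1) := by
  rw [explicitSolution, one_sub_div ht, add_sub_add_left_eq_sub]

theorem sub_eq (x₀ : 𝕜) (ht : c * t ^ 2 + 1 ≠ 0) :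
    explicitSolution x₀ c t - x₀ = (1 - x₀) * (c * t ^ 2) / (c * t ^ 2 + 1) := by
  rw [explicitSolution, div_sub' ht]
  ring

theorem denom_eq_sq_mul (c : 𝕜) (ht : t ≠ 0) : c * t ^ 2 + 1 = t ^ 2 * (c + t⁻¹ ^ 2) := by
  field_simp

theorem sq_mul_one_sub_eq (x₀ : 𝕜) (ht₀ : t ≠ 0) (ht : c * t ^ 2 + 1 ≠ 0) :
    t ^ 2 * (1 - explicitSolution x₀ c t) = (1 - x₀) / (c + t⁻¹ ^ 2) := by
  rw [one_sub_eq x₀ ht, denom_eq_sq_mul c ht₀, ← mul_div_assoc,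
    mul_div_mul_left _ _ (pow_ne_zero 2 ht₀)]

end Field

theorem hasDerivAt {𝕜 : Type*} [NontriviallyNormedField 𝕜] (x₀ : 𝕜) {c t : 𝕜}
    (ht : c * t ^ 2 + 1 ≠ 0) :
    HasDerivAt (explicitSolution x₀ c) (2 * c * t * (1 - x₀) / (c * t ^ 2 + 1) ^ 2) t := by
  have hquad : HasDerivAt (fun s : 𝕜 ↦ c * s ^ 2) (c * (2 * t)) t := by
    simpa using (hasDerivAt_pow 2 t).const_mul c
  exact ((hquad.add_const x₀).fun_div (hquad.add_const 1) ht).congr_deriv (by ring)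

theorem deriv_sq {𝕜 : Type*} [NontriviallyNormedField 𝕜] {x₀ c t : 𝕜} (hx₀ : x₀ ≠ 1)
    (ht : c * t ^ 2 + 1 ≠ 0) :
    deriv (explicitSolution x₀ c) t ^ 2 =
      4 * c / (1 - x₀) ^ 2 * (1 - explicitSolution x₀ c t) ^ 3 *
        (explicitSolution x₀ c t - x₀) := by
  have hx₀' : 1 - x₀ ≠ 0 := sub_ne_zero.mpr hx₀.symm
  rw [(hasDerivAt x₀ ht).deriv, one_sub_eq x₀ ht, sub_eq x₀ ht]
  field_simp
  ring

theorem tendsto_sq_mul_one_sub {𝕜 : Type*} [NormedField 𝕜] (x₀ : 𝕜) {c : 𝕜} (hc : c ≠ 0) :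
    Tendsto (fun t ↦ t ^ 2 * (1 - explicitSolution x₀ c t)) (Bornology.cobounded 𝕜)
      (𝓝 ((1 - x₀) / c)) := by
  have hden : Tendsto (fun t : 𝕜 ↦ c + t⁻¹ ^ 2) (Bornology.cobounded 𝕜) (𝓝 c) := by
    simpa using (tendsto_inv₀_cobounded.pow 2).const_add c
  refine (tendsto_const_nhds.div hden hc).congr' ?_
  filter_upwards [hden.eventually_ne hc, Bornology.eventually_ne_cobounded 0] with t htden ht₀
  have ht : c * t ^ 2 + 1 ≠ 0 :=
    denom_eq_sq_mul c ht₀ ▸ mul_ne_zero (pow_ne_zero 2 ht₀) htden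
  exact (sq_mul_one_sub_eq x₀ ht₀ ht).symm

end explicitSolution

theorem explicit_polynomial_solution_general {𝕜 : Type*} [NontriviallyNormedField 𝕜] {x₀ c : 𝕜}
    (hx₀ : x₀ ≠ 1) (hc : c ≠ 0) :
    (∀ t, c * t ^ 2 + 1 ≠ 0 →
      deriv (explicitSolution x₀ c) t ^ 2 =
        4 * c / (1 - x₀) ^ 2 * (1 - explicitSolution x₀ c t) ^ 3 *
          (explicitSolution x₀ c t - x₀)) ∧
    (∀ t, c * t ^ 2 + 1 ≠ 0 → 1 - explicitSolution x₀ c t = (1 - x₀) / (1 + c * t ^ 2)) ∧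
    Tendsto (fun t ↦ t ^ 2 * (1 - explicitSolution x₀ c t)) (Bornology.cobounded 𝕜)
      (𝓝 ((1 - x₀) / c)) :=
  ⟨fun _ ↦ explicitSolution.deriv_sq hx₀,
    fun t ht ↦ add_comm 1 (c * t ^ 2) ▸ explicitSolution.one_sub_eq x₀ ht,
    explicitSolution.tendsto_sq_mul_one_sub x₀ hc⟩

/-- The rational function `x(t) = (c̃t² + x₀)/(c̃t² + 1)` satisfies
`x'² = (4c̃/(1-x₀)²)(1-x)³(x-x₀)` and `1 - x(t) = (1-x₀)/(1 + c̃t²)`, and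
`t²(1-x(t)) → (1-x₀)/c̃` as `t → ∞`: `x → 1` at a quadratic rate. -/
theorem explicit_polynomial_solution (x₀ ctil : ℝ) (hx0 : 0 ≤ x₀) (hx1 : x₀ < 1)
    (hc : 0 < ctil) :
    (∀ t : ℝ,
      (deriv (fun t : ℝ => (ctil * t ^ 2 + x₀) / (ctil * t ^ 2 + 1)) t) ^ 2
        = (4 * ctil / (1 - x₀) ^ 2)
          * (1 - (ctil * t ^ 2 + x₀) / (ctil * t ^ 2 + 1)) ^ 3
          * ((ctil * t ^ 2 + x₀) / (ctil * t ^ 2 + 1) - x₀))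
    ∧ (∀ t : ℝ,
      1 - (ctil * t ^ 2 + x₀) / (ctil * t ^ 2 + 1) = (1 - x₀) / (1 + ctil * t ^ 2))
    ∧ Tendsto (fun t : ℝ =>
        t ^ 2 * (1 - (ctil * t ^ 2 + x₀) / (ctil * t ^ 2 + 1)))
      atTop (𝓝 ((1 - x₀) / ctil)) := by
  obtain ⟨hode, hgap, hlim⟩ := explicit_polynomial_solution_general hx1.ne hc.ne'
  exact ⟨fun t ↦ hode t (by positivity), fun t ↦ hgap t (by positivity),
    hlim.mono_left IsOrderBornology.atTop_le_cobounded⟩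
end

section
/- Let β ∈ ℝ, let I ⊆ ℝ be an interval, and let p, b, a : I → ℂ be differentiable with |p(t)| < 1 for all t ∈ I, satisfying i p' = (N − β(1−|p|²)E)p + a·conj(b), i b' = (N+E)b + E·a·conj(p), i a' = (N − βE)a − βE|p|²·b·p, where E(t) = |b(t)p(t)+a(t)|²/(1−|p(t)|²)² and N(t) = |b(t)|² + (1−|p(t)|²)E(t). Define α_0(t) = b(t) and α_n(t) = (b(t)p(t)+a(t))·p(t)^{n−1} for n ≥ 1. Then α solves the β-Szegő equation: i·α_0'(t) = Σ_{m=0}^∞ Σ_{k=0}^m conj(α_m)·α_k·α_{m−k}, and for every n ≥ 1, i·α_n'(t) = Σ_{m=0}^∞ Σ_{k=0}^{n+m} conj(α_m)·α_k·α_{n+m−k} − β·Σ_{m=1}^∞ Σ_{k=1}^{n+m−1} conj(α_m)·α_k·α_{n+m−k} (all series converging absolutely since |p| < 1). -/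
/-!
On the sequence `α₀ = b`, `αₙ₊₁ = c pⁿ` every convolution over positive indices is
`∑ c pⁱ · c pʲ = (number of terms) · c² pⁱ⁺ʲ`, so the Szegő sums reduce to the series `∑ rʲ` and
`∑ (j + 1) rʲ` at `r = |p|²`, which are `(1 - r) E / |c|²` and `E / |c|²`.
In the variables `p` and `c = b p + a` the ODE system becomes
`i p' = (1 - β) (1 - r) E p + c b̄` and `i c' = (2 |b|² + (1 - β) E) c + 2 (1 - r) E b p`,
and substituting these into `i (c pⁿ)'` produces the summed series term by term.
-/

open ComplexConjugate

section Convolution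

variable {R : Type*} [CommSemiring R]

theorem sum_range_mul_self_eq_two_mul_add_sum_Icc (A : ℕ → R) (M : ℕ) :
    ∑ k ∈ Finset.range (M + 2), A k * A (M + 1 - k)
      = 2 * A 0 * A (M + 1) + ∑ k ∈ Finset.Icc 1 M, A k * A (M + 1 - k) := by
  have interior : ∑ k ∈ Finset.range M, A (k + 1) * A (M + 1 - (k + 1))
      = ∑ k ∈ Finset.Icc 1 M, A k * A (M + 1 - k) := by
    rw [← Finset.Ico_add_one_right_eq_Icc, Finset.sum_Ico_eq_sum_range]
    simp only [Nat.add_sub_cancel, add_comm 1]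
  rw [Finset.sum_range_succ, Finset.sum_range_succ', interior, Nat.sub_self, Nat.sub_zero]
  ring

variable {A : ℕ → R} {c p : R}

theorem sum_Icc_mul_self_of_geometric (hA : ∀ n, A (n + 1) = c * p ^ n) (M : ℕ) :
    ∑ k ∈ Finset.Icc 1 M, A k * A (M + 1 - k) = M * c ^ 2 * p ^ (M - 1) := by
  have term_eq : ∀ k ∈ Finset.Icc 1 M, A k * A (M + 1 - k) = c ^ 2 * p ^ (M - 1) := by
    intro k hk
    obtain ⟨one_le, le_M⟩ := Finset.mem_Icc.mp hk
    obtain ⟨i, rfl⟩ := Nat.exists_eq_add_of_le' one_le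
    obtain ⟨j, rfl⟩ := Nat.exists_eq_add_of_le le_M
    rw [show i + 1 + j + 1 - (i + 1) = j + 1 by lia, show i + 1 + j - 1 = i + j by lia, hA, hA]
    ring
  rw [Finset.sum_congr rfl term_eq, Finset.sum_const, Nat.card_Icc, Nat.add_sub_cancel,
    nsmul_eq_mul, mul_assoc]

end Convolution

section SzegoSums

variable {R : Type*} [CommSemiring R] [StarRing R]

/-- The `m`-th term, in the index of the conjugated factor, of the full cubic Szegő sum at
mode `n`. -/
def szegoTerm (A : ℕ → R) (n m : ℕ) : R :=
  ∑ k ∈ Finset.range (n + m + 1), conj (A m) * A k * A (n + m - k)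

/-- The `m`-th term of the cubic Szegő sum at mode `n` restricted to positive indices. The
conjugated factor has index `m + 1`, so that `m` ranges over all of `ℕ`. -/
def positiveSzegoTerm (A : ℕ → R) (n m : ℕ) : R :=
  ∑ k ∈ Finset.Icc 1 (n + m), conj (A (m + 1)) * A k * A (n + m + 1 - k)

theorem szegoTerm_zero_right (A : ℕ → R) (n : ℕ) :
    szegoTerm A n 0 = conj (A 0) * ∑ k ∈ Finset.range (n + 1), A k * A (n - k) := by
  simp only [szegoTerm, add_zero, Finset.mul_sum, mul_assoc]

theorem positiveSzegoTerm_eq_mul_sum (A : ℕ → R) (n m : ℕ) :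
    positiveSzegoTerm A n m
      = conj (A (m + 1)) * ∑ k ∈ Finset.Icc 1 (n + m), A k * A (n + m + 1 - k) := by
  simp only [positiveSzegoTerm, Finset.mul_sum, mul_assoc]

theorem szegoTerm_succ_right (A : ℕ → R) (n m : ℕ) :
    szegoTerm A n (m + 1)
      = 2 * A 0 * (conj (A (m + 1)) * A (n + m + 1)) + positiveSzegoTerm A n m := by
  simp only [szegoTerm, ← add_assoc, mul_assoc, ← Finset.mul_sum]
  rw [sum_range_mul_self_eq_two_mul_add_sum_Icc, positiveSzegoTerm_eq_mul_sum]
  ring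

theorem hasSum_szegoTerm [TopologicalSpace R] [IsTopologicalSemiring R] {A : ℕ → R} {n : ℕ}
    {x y : R} (hx : HasSum (fun m ↦ conj (A (m + 1)) * A (n + m + 1)) x)
    (hy : HasSum (positiveSzegoTerm A n) y) :
    HasSum (szegoTerm A n)
      (conj (A 0) * ∑ k ∈ Finset.range (n + 1), A k * A (n - k) + (2 * A 0 * x + y)) := by
  rw [← szegoTerm_zero_right]
  refine HasSum.zero_add ?_
  simpa only [szegoTerm_succ_right] using (hx.mul_left (2 * A 0)).add hy

theorem positiveSzegoTerm_of_geometric {A : ℕ → R} {c p : R}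
    (hA : ∀ n, A (n + 1) = c * p ^ n) (n m : ℕ) :
    positiveSzegoTerm A n m
      = conj (c * p ^ m) * ((n + m : ℕ) * c ^ 2 * p ^ (n + m - 1)) := by
  rw [positiveSzegoTerm_eq_mul_sum, sum_Icc_mul_self_of_geometric hA, hA]

end SzegoSums

theorem natCast_mul_pow_sub_one_mul_self {R : Type*} [Semiring R] (x : R) (n : ℕ) :
    n * x ^ (n - 1) * x = n * x ^ n := by
  rcases n with _ | n
  · simp
  · rw [mul_assoc, pow_sub_one_mul n.succ_ne_zero]

section GeometricSequence

variable {𝕜 : Type*} [RCLike 𝕜]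

/-- The quantity `E = ∑ n |αₙ|²` of the sequence `αₙ = c pⁿ⁻¹`, `n ≥ 1`, in closed form. -/
noncomputable def geometricEnergy (c p : 𝕜) : ℝ :=
  ‖c‖ ^ 2 / (1 - ‖p‖ ^ 2) ^ 2

variable {A : ℕ → 𝕜} {c p : 𝕜}

theorem norm_ofReal_norm_sq_lt_one (hp : ‖p‖ < 1) : ‖(‖p‖ : 𝕜) ^ 2‖ < 1 := by
  simpa only [norm_pow, RCLike.norm_ofReal, abs_norm] using
    pow_lt_one₀ (norm_nonneg p) hp two_ne_zero

theorem one_sub_ofReal_norm_sq_ne_zero (hp : ‖p‖ < 1) : 1 - (‖p‖ : 𝕜) ^ 2 ≠ 0 :=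
  (isUnit_one_sub_of_norm_lt_one (norm_ofReal_norm_sq_lt_one hp)).ne_zero

theorem hasSum_norm_sq_pow_mul_norm_sq (c : 𝕜) (hp : ‖p‖ < 1) :
    HasSum (fun j : ℕ ↦ ((‖p‖ : 𝕜) ^ 2) ^ j * (‖c‖ : 𝕜) ^ 2)
      ((1 - (‖p‖ : 𝕜) ^ 2) * (geometricEnergy c p : 𝕜)) := by
  have ne := one_sub_ofReal_norm_sq_ne_zero hp
  have value_eq : (1 - (‖p‖ : 𝕜) ^ 2) * (geometricEnergy c p : 𝕜)
      = (1 - (‖p‖ : 𝕜) ^ 2)⁻¹ * (‖c‖ : 𝕜) ^ 2 := by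
    rw [geometricEnergy]
    push_cast
    field_simp
  rw [value_eq]
  exact (hasSum_geometric_of_norm_lt_one (norm_ofReal_norm_sq_lt_one hp)).mul_right _

theorem hasSum_succ_mul_norm_sq_pow_mul_norm_sq (c : 𝕜) (hp : ‖p‖ < 1) :
    HasSum (fun j : ℕ ↦ ((j : 𝕜) + 1) * ((‖p‖ : 𝕜) ^ 2) ^ j * (‖c‖ : 𝕜) ^ 2)
      (geometricEnergy c p : 𝕜) := by
  have value_eq : (geometricEnergy c p : 𝕜)
      = 1 / (1 - (‖p‖ : 𝕜) ^ 2) ^ (1 + 1) * (‖c‖ : 𝕜) ^ 2 := by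
    rw [geometricEnergy]
    push_cast
    ring
  rw [value_eq]
  simpa only [Nat.choose_one_right, Nat.cast_add, Nat.cast_one] using
    (hasSum_choose_mul_geometric_of_norm_lt_one 1
      (norm_ofReal_norm_sq_lt_one hp)).mul_right ((‖c‖ : 𝕜) ^ 2)

theorem hasSum_conj_mul_shift_of_geometric (hA : ∀ n, A (n + 1) = c * p ^ n) (hp : ‖p‖ < 1)
    (n : ℕ) :
    HasSum (fun m ↦ conj (A (m + 1)) * A (n + m + 1))
      ((1 - (‖p‖ : 𝕜) ^ 2) * (geometricEnergy c p : 𝕜) * p ^ n) := by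
  refine ((hasSum_norm_sq_pow_mul_norm_sq c hp).mul_right (p ^ n)).congr_fun fun m ↦ ?_
  simp only [hA, map_mul, map_pow, ← RCLike.conj_mul]
  ring

theorem hasSum_positiveSzegoTerm_zero_of_geometric (hA : ∀ n, A (n + 1) = c * p ^ n)
    (hp : ‖p‖ < 1) :
    HasSum (positiveSzegoTerm A 0) ((geometricEnergy c p : 𝕜) * (c * conj p)) := by
  have first_term : positiveSzegoTerm A 0 0 = 0 := by
    simp only [positiveSzegoTerm_of_geometric hA, add_zero, Nat.cast_zero, zero_mul, mul_zero]
  rw [← zero_add (_ * _), ← first_term]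
  refine HasSum.zero_add (((hasSum_succ_mul_norm_sq_pow_mul_norm_sq c hp).mul_right
    (c * conj p)).congr_fun fun m ↦ ?_)
  rw [positiveSzegoTerm_of_geometric hA, zero_add, Nat.add_sub_cancel]
  simp only [map_mul, map_pow, ← RCLike.conj_mul]
  push_cast
  ring

theorem hasSum_positiveSzegoTerm_succ_of_geometric (hA : ∀ n, A (n + 1) = c * p ^ n)
    (hp : ‖p‖ < 1) (n : ℕ) :
    HasSum (positiveSzegoTerm A (n + 1))
      ((n * ((1 - (‖p‖ : 𝕜) ^ 2) * (geometricEnergy c p : 𝕜)) + (geometricEnergy c p : 𝕜))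
        * (c * p ^ n)) := by
  refine ((((hasSum_norm_sq_pow_mul_norm_sq c hp).mul_left (n : 𝕜)).add
    (hasSum_succ_mul_norm_sq_pow_mul_norm_sq c hp)).mul_right (c * p ^ n)).congr_fun fun m ↦ ?_
  rw [positiveSzegoTerm_of_geometric hA, show n + 1 + m - 1 = n + m by lia]
  simp only [map_mul, map_pow, ← RCLike.conj_mul]
  push_cast
  ring

theorem hasSum_szegoTerm_zero_of_geometric (hA : ∀ n, A (n + 1) = c * p ^ n) (hp : ‖p‖ < 1) :
    HasSum (szegoTerm A 0)
      (((‖A 0‖ : 𝕜) ^ 2 + 2 * ((1 - (‖p‖ : 𝕜) ^ 2) * (geometricEnergy c p : 𝕜))) * A 0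
        + (geometricEnergy c p : 𝕜) * (c * conj p)) := by
  convert hasSum_szegoTerm (hasSum_conj_mul_shift_of_geometric hA hp 0)
    (hasSum_positiveSzegoTerm_zero_of_geometric hA hp) using 1
  rw [zero_add, Finset.sum_range_one, ← RCLike.conj_mul (A 0)]
  ring

theorem hasSum_szegoTerm_succ_of_geometric (hA : ∀ n, A (n + 1) = c * p ^ n) (hp : ‖p‖ < 1)
    (n : ℕ) :
    HasSum (szegoTerm A (n + 1))
      (2 * (‖A 0‖ : 𝕜) ^ 2 * (c * p ^ n) + n * c ^ 2 * p ^ (n - 1) * conj (A 0)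
        + 2 * ((1 - (‖p‖ : 𝕜) ^ 2) * (geometricEnergy c p : 𝕜)) * A 0 * p ^ (n + 1)
        + (n * ((1 - (‖p‖ : 𝕜) ^ 2) * (geometricEnergy c p : 𝕜)) + (geometricEnergy c p : 𝕜))
        * (c * p ^ n)) := by
  convert hasSum_szegoTerm (hasSum_conj_mul_shift_of_geometric hA hp (n + 1))
    (hasSum_positiveSzegoTerm_succ_of_geometric hA hp n) using 1
  rw [sum_range_mul_self_eq_two_mul_add_sum_Icc, sum_Icc_mul_self_of_geometric hA, hA,
    ← RCLike.conj_mul (A 0)]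
  ring

end GeometricSequence

section L1System

variable {β : ℂ} {p b a : ℝ → ℂ} {t : ℝ}

theorem ofReal_Ntr (p b a : ℝ → ℂ) (t : ℝ) :
    (Ntr p b a t : ℂ) = (‖b t‖ : ℂ) ^ 2 + (1 - (‖p t‖ : ℂ) ^ 2) * Etr p b a t := by
  simp only [Ntr]
  push_cast
  rfl

theorem I_mul_deriv_ratio
    (hode_p : Complex.I * deriv p t
      = (Ntr p b a t - β * (1 - (‖p t‖ : ℂ) ^ 2) * Etr p b a t) * p t + a t * conj (b t)) :
    Complex.I * deriv p t
      = (1 - β) * (1 - (‖p t‖ : ℂ) ^ 2) * Etr p b a t * p t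
        + (b t * p t + a t) * conj (b t) := by
  rw [hode_p, ofReal_Ntr, ← Complex.conj_mul' (b t)]
  ring

theorem I_mul_deriv_amplitude
    (hp : DifferentiableAt ℝ p t) (hb : DifferentiableAt ℝ b t) (ha : DifferentiableAt ℝ a t)
    (hode_p : Complex.I * deriv p t
      = (Ntr p b a t - β * (1 - (‖p t‖ : ℂ) ^ 2) * Etr p b a t) * p t + a t * conj (b t))
    (hode_b : Complex.I * deriv b t
      = (Ntr p b a t + Etr p b a t) * b t + Etr p b a t * a t * conj (p t))
    (hode_a : Complex.I * deriv a t
      = (Ntr p b a t - β * Etr p b a t) * a t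
        - β * Etr p b a t * (‖p t‖ : ℂ) ^ 2 * b t * p t) :
    Complex.I * deriv (fun s ↦ b s * p s + a s) t
      = (2 * (‖b t‖ : ℂ) ^ 2 + (1 - β) * Etr p b a t) * (b t * p t + a t)
        + 2 * ((1 - (‖p t‖ : ℂ) ^ 2) * Etr p b a t) * b t * p t := by
  rw [deriv_fun_add (hb.fun_mul hp) ha, deriv_fun_mul hb hp]
  rw [ofReal_Ntr, ← Complex.conj_mul', ← Complex.conj_mul'] at hode_p hode_b hode_a
  rw [← Complex.conj_mul', ← Complex.conj_mul']
  linear_combination b t * hode_p + p t * hode_b + hode_a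

theorem I_mul_deriv_mul_pow {c : ℝ → ℂ} (hc : DifferentiableAt ℝ c t)
    (hp : DifferentiableAt ℝ p t) (n : ℕ) :
    Complex.I * deriv (fun s ↦ c s * p s ^ n) t
      = Complex.I * deriv c t * p t ^ n
        + n * c t * p t ^ (n - 1) * (Complex.I * deriv p t) := by
  rw [deriv_fun_mul hc (hp.fun_pow n), deriv_fun_pow hp n]
  ring

end L1System

theorem L1_ansatz_solves_beta_szego_general {β : ℂ} {p b a : ℝ → ℂ} {t : ℝ}
    (hp : DifferentiableAt ℝ p t) (hb : DifferentiableAt ℝ b t) (ha : DifferentiableAt ℝ a t)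
    (hp1 : ‖p t‖ < 1)
    (hode_p : Complex.I * deriv p t
      = (Ntr p b a t - β * (1 - (‖p t‖ : ℂ) ^ 2) * Etr p b a t) * p t + a t * conj (b t))
    (hode_b : Complex.I * deriv b t
      = (Ntr p b a t + Etr p b a t) * b t + Etr p b a t * a t * conj (p t))
    (hode_a : Complex.I * deriv a t
      = (Ntr p b a t - β * Etr p b a t) * a t
        - β * Etr p b a t * (‖p t‖ : ℂ) ^ 2 * b t * p t)
    {α : ℕ → ℝ → ℂ} (hα0 : ∀ s, α 0 s = b s)
    (hαn : ∀ n s, α (n + 1) s = (b s * p s + a s) * p s ^ n) :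
    HasSum (szegoTerm (α · t) 0) (Complex.I * deriv (α 0) t) ∧
      ∀ n, 1 ≤ n →
        Summable (szegoTerm (α · t) n) ∧ Summable (positiveSzegoTerm (α · t) n) ∧
          Complex.I * deriv (α n) t
            = ∑' m, szegoTerm (α · t) n m - β * ∑' m, positiveSzegoTerm (α · t) n m := by
  have geometric : ∀ n, α (n + 1) t = (b t * p t + a t) * p t ^ n := (hαn · t)
  have energy : geometricEnergy (b t * p t + a t) (p t) = Etr p b a t := rfl
  constructor
  · have deriv_eq : Complex.I * deriv (α 0) t
        = ((‖α 0 t‖ : ℂ) ^ 2 + 2 * ((1 - (‖p t‖ : ℂ) ^ 2) * Etr p b a t)) * α 0 t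
          + Etr p b a t * ((b t * p t + a t) * conj (p t)) := by
      rw [funext hα0, hode_b, ofReal_Ntr, ← Complex.conj_mul' (p t)]
      ring
    rw [deriv_eq]
    exact hasSum_szegoTerm_zero_of_geometric (A := (α · t)) geometric hp1
  · intro n one_le
    obtain ⟨v, rfl⟩ := Nat.exists_eq_add_of_le' one_le
    have full := hasSum_szegoTerm_succ_of_geometric (A := (α · t)) geometric hp1 v
    have positive := hasSum_positiveSzegoTerm_succ_of_geometric (A := (α · t)) geometric hp1 v
    refine ⟨full.summable, positive.summable, ?_⟩
    rw [full.tsum_eq, positive.tsum_eq, funext (hαn v),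
      I_mul_deriv_mul_pow ((hb.fun_mul hp).fun_add ha) hp,
      I_mul_deriv_amplitude hp hb ha hode_p hode_b hode_a, I_mul_deriv_ratio hode_p, hα0, energy]
    linear_combination (1 - β) * (1 - (‖p t‖ : ℂ) ^ 2) * Etr p b a t * (b t * p t + a t)
      * natCast_mul_pow_sub_one_mul_self (p t) v

/-- If `p, b, a` solve the β-Szegő `L(1)` ODE system on an interval `I`, then the
sequence `α₀ = b`, `α_n = (bp+a)p^{n-1}` (`n ≥ 1`) solves the β-Szegő equation on `I`:
`i α₀' = Σ_{m≥0} Σ_{k=0}^m conj(α_m) α_k α_{m-k}` and, for `n ≥ 1`,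
`i α_n' = Σ_{m≥0} Σ_{k=0}^{n+m} conj(α_m) α_k α_{n+m-k}
  - β Σ_{m≥1} Σ_{k=1}^{n+m-1} conj(α_m) α_k α_{n+m-k}`
(the second sum being reindexed by `m ↦ m+1`). -/
theorem L1_ansatz_solves_beta_szego (β : ℝ) (I : Set ℝ) (hI : I.OrdConnected)
    (p b a : ℝ → ℂ)
    (hp : ∀ t ∈ I, DifferentiableAt ℝ p t)
    (hb : ∀ t ∈ I, DifferentiableAt ℝ b t)
    (ha : ∀ t ∈ I, DifferentiableAt ℝ a t)
    (hp1 : ∀ t ∈ I, ‖p t‖ < 1)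
    (hode : ∀ t ∈ I,
      Complex.I * deriv p t =
        ((Ntr p b a t - β * (1 - ‖p t‖ ^ 2) * Etr p b a t : ℝ) : ℂ) * p t
          + a t * conj (b t) ∧
      Complex.I * deriv b t =
        ((Ntr p b a t + Etr p b a t : ℝ) : ℂ) * b t
          + (Etr p b a t : ℂ) * a t * conj (p t) ∧
      Complex.I * deriv a t =
        ((Ntr p b a t - β * Etr p b a t : ℝ) : ℂ) * a t
          - ((β * Etr p b a t * ‖p t‖ ^ 2 : ℝ) : ℂ) * b t * p t)
    (α : ℕ → ℝ → ℂ)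
    (hα0 : ∀ t : ℝ, α 0 t = b t)
    (hαn : ∀ (n : ℕ) (t : ℝ), α (n + 1) t = (b t * p t + a t) * p t ^ n) :
    ∀ t ∈ I,
      (Complex.I * deriv (α 0) t =
        ∑' m : ℕ, ∑ k ∈ Finset.range (m + 1), conj (α m t) * α k t * α (m - k) t)
      ∧ ∀ n : ℕ, 1 ≤ n →
          Complex.I * deriv (α n) t =
            (∑' m : ℕ, ∑ k ∈ Finset.range (n + m + 1),
                conj (α m t) * α k t * α (n + m - k) t)
              - (β : ℂ) * ∑' m : ℕ, ∑ k ∈ Finset.Icc 1 (n + m),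
                  conj (α (m + 1) t) * α k t * α (n + m + 1 - k) t := by
  intro t ht
  have hode_t := hode t ht
  push_cast at hode_t
  obtain ⟨hode_p, hode_b, hode_a⟩ := hode_t
  obtain ⟨zero_mode, positive_modes⟩ := L1_ansatz_solves_beta_szego_general (hp t ht) (hb t ht)
    (ha t ht) (hp1 t ht) hode_p hode_b hode_a hα0 hαn
  constructor
  · simpa only [szegoTerm, zero_add] using zero_mode.tsum_eq.symm
  · exact fun n one_le ↦ (positive_modes n one_le).2.2
end
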